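/- arXiv:2206.02411 — 8 statements merged into one kernel-verified Lean document; each statement's English description precedes it below -/
import Mathlib

section
/- Let p be a prime, m a positive integer, and j a nonnegative integer with j ≤ val_p(m). Then val_p(C(m, p^j)) = val_p(m) − j. -/
/-!
By `C(m, k + 1) * (k + 1) = C(m, k) * (m - k)`, and because `val_p(m - k) = val_p(k)` whenever
`0 < k < p ^ val_p(m)`, the quantity `val_p(C(m, k)) + val_p(k)` does not change as `k` runs from
`1` to `p ^ val_p(m)`. At `k = 1` it equals `val_p(m)`.
-/

theorem padicValNat_sub_of_gt {p m k : ℕ} (hk : k ≠ 0) (hkm : k < m)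
    (hlt : padicValNat p k < padicValNat p m) : padicValNat p (m - k) = padicValNat p k := by
  have hp : p ≠ 1 := by
    rintro rfl
    simp at hlt
  have hval {n : ℕ} (hn : n ≠ 0) : (padicValNat p n : ℕ∞) = emultiplicity (p : ℤ) n := by
    rw [padicValNat_eq_emultiplicity_of_ne_one hp hn, Int.natCast_emultiplicity]
  have hgt : emultiplicity (p : ℤ) k < emultiplicity (p : ℤ) m := by
    rw [← hval hk, ← hval (Nat.ne_zero_of_lt hkm)]
    exact_mod_cast hlt
  have hsub : (padicValNat p (m - k) : ℕ∞) = padicValNat p k := by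
    rw [hval (Nat.sub_ne_zero_of_lt hkm), hval hk, Nat.cast_sub hkm.le, emultiplicity_sub_of_gt hgt]
  exact_mod_cast hsub

theorem padicValNat_lt_of_lt_pow {p k n : ℕ} (hk : k ≠ 0) (hkn : k < p ^ n) :
    padicValNat p k < n :=
  (padicValNat_le_nat_log k).trans_lt (Nat.log_lt_of_lt_pow hk hkn)

theorem padicValNat_choose_succ_add_padicValNat_succ {p m k : ℕ} (hp : p.Prime) (hkm : k < m) :
    padicValNat p (m.choose (k + 1)) + padicValNat p (k + 1) =
      padicValNat p (m.choose k) + padicValNat p (m - k) := by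
  have : Fact p.Prime := ⟨hp⟩
  rw [← padicValNat.mul (Nat.choose_ne_zero hkm) k.succ_ne_zero, Nat.choose_succ_right_eq,
    padicValNat.mul (Nat.choose_ne_zero hkm.le) (Nat.sub_ne_zero_of_lt hkm)]

theorem stmt1_general {p m k : ℕ} (hp : p.Prime) (hm : 0 < m) (hk : 1 ≤ k)
    (hkm : k ≤ p ^ padicValNat p m) :
    padicValNat p (m.choose k) + padicValNat p k = padicValNat p m := by
  induction k, hk using Nat.le_induction with
  | base => simp
  | succ k hk ih =>
    have hk0 : k ≠ 0 := Nat.one_le_iff_ne_zero.mp hk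
    have hlt_pow : k < p ^ padicValNat p m := hkm
    have hlt : k < m := hlt_pow.trans_le (Nat.le_of_dvd hm pow_padicValNat_dvd)
    rw [padicValNat_choose_succ_add_padicValNat_succ hp hlt,
      padicValNat_sub_of_gt hk0 hlt (padicValNat_lt_of_lt_pow hk0 hlt_pow), ih hlt_pow.le]

/-- For a prime `p`, a positive integer `m` and `j ≤ val_p(m)`,
one has `val_p(C(m, p^j)) = val_p(m) - j`. -/
theorem stmt1 (p m j : ℕ) (hp : p.Prime) (hm : 0 < m) (hj : j ≤ padicValNat p m) :
    padicValNat p (m.choose (p ^ j)) = padicValNat p m - j := by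
  have : Fact p.Prime := ⟨hp⟩
  simpa using Nat.eq_sub_of_add_eq
    (stmt1_general hp hm (Nat.one_le_pow j p hp.pos) (Nat.pow_le_pow_right hp.pos hj))
end

section
/- Let p be an odd prime, let R be a commutative ring, let x, y ∈ R, and let m, e be positive integers. Then (x + p^e·y)^m − x^m − m·p^e·x^{m−1}·y lies in the ideal of R generated by the element p^{e + val_p(m) + 1}·1. -/
/-!
Expand `(x + n ^ e * y) ^ m` by the binomial theorem: the terms that survive the subtraction are
`m.choose k * n ^ (e * k) * x ^ (m - k) * y ^ k` with `2 ≤ k`. The identity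
`k * m.choose k = m * (m - 1).choose (k - 1)` shows that, if `n ^ v ∣ m`, the coefficient
`m.choose k` can miss divisibility by `n ^ v` only through the common factor of `k` and `n ^ v`.
Every prime factor `q` of the odd number `n` is at least `3`, so `q ^ b ∣ k` forces `b ≤ k - 2`;
hence this common factor divides `n ^ (k - 2)`. Since `(k - 2) + (e + 1) ≤ e * k`, the power
`n ^ (e * k)` makes up for it and still supplies `n ^ (e + 1)`.
-/

lemma le_sub_two_of_pow_le {q b k : ℕ} (hq : 3 ≤ q) (hqk : q ^ b ≤ k) : b ≤ k - 2 := by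
  have bernoulli : 1 + b * 2 ≤ 3 ^ b := one_add_le_pow_of_two_add_nonneg zero_le b
  have hbk : 3 ^ b ≤ k := (Nat.pow_le_pow_left hq b).trans hqk
  omega

lemma gcd_pow_dvd_pow_sub_two {n k : ℕ} (hn : Odd n) (hk : k ≠ 0) (v : ℕ) :
    k.gcd (n ^ v) ∣ n ^ (k - 2) := by
  refine (Nat.dvd_iff_prime_pow_dvd_dvd _ _).2 fun q b hq hqb => ?_
  obtain ⟨hqk, hqn⟩ := Nat.dvd_gcd_iff.1 hqb
  obtain rfl | hb := eq_or_ne b 0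
  · simp
  have hq_dvd : q ∣ n := hq.dvd_of_dvd_pow ((dvd_pow_self q hb).trans hqn)
  have hq_three : 3 ≤ q := by
    obtain ⟨t, rfl⟩ := hn.of_dvd_nat hq_dvd
    have := hq.two_le
    omega
  have hbk : b ≤ k - 2 := le_sub_two_of_pow_le hq_three (Nat.le_of_dvd hk.pos hqk)
  exact (pow_dvd_pow q hbk).trans (pow_dvd_pow_of_dvd hq_dvd _)

lemma dvd_gcd_mul_choose {d m : ℕ} (hd : d ∣ m) (k : ℕ) : d ∣ k.gcd d * m.choose k := by
  have hd_choose : d ∣ k * m.choose k := by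
    obtain _ | j := k
    · simp
    obtain _ | l := m
    · simp
    rw [mul_comm, ← Nat.add_one_mul_choose_eq]
    exact hd.mul_right _
  rw [← Nat.gcd_mul_right]
  exact Nat.dvd_gcd hd_choose (dvd_mul_right d _)

lemma pow_dvd_choose_mul_pow {n m v e k : ℕ} (hn : Odd n) (hm : n ^ v ∣ m) (he : 0 < e)
    (hk : 2 ≤ k) : n ^ (e + v + 1) ∣ m.choose k * n ^ (e * k) := by
  have hexp : k - 2 + (e + 1) ≤ e * k := by
    calc k - 2 + (e + 1) = k - 1 + e := by omega
      _ ≤ e * (k - 1) + e := Nat.add_le_add_right (Nat.le_mul_of_pos_left _ he) e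
      _ = e * k := by rw [← Nat.mul_succ, Nat.succ_eq_add_one, Nat.sub_add_cancel (by omega)]
  calc n ^ (e + v + 1)
      = n ^ v * n ^ (e + 1) := by ring
    _ ∣ k.gcd (n ^ v) * m.choose k * n ^ (e + 1) :=
        mul_dvd_mul_right (dvd_gcd_mul_choose hm k) _
    _ ∣ n ^ (k - 2) * m.choose k * n ^ (e + 1) :=
        mul_dvd_mul_right (mul_dvd_mul_right (gcd_pow_dvd_pow_sub_two hn (by omega) v) _) _
    _ = m.choose k * n ^ (k - 2 + (e + 1)) := by ring
    _ ∣ m.choose k * n ^ (e * k) := mul_dvd_mul_left _ (pow_dvd_pow n hexp)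

section CommRing

variable {R : Type*} [CommRing R]

lemma add_pow_sub_pow_sub_eq_sum (x z : R) (m : ℕ) :
    (x + z) ^ m - x ^ m - m * x ^ (m - 1) * z =
      ∑ k ∈ Finset.Ico 2 (m + 1), z ^ k * x ^ (m - k) * m.choose k := by
  obtain _ | l := m
  · simp
  rw [add_comm x, add_pow, Finset.range_eq_Ico, Finset.sum_eq_sum_Ico_succ_bot (by omega),
    Finset.sum_eq_sum_Ico_succ_bot (by omega)]
  simp only [pow_zero, tsub_zero, one_mul, Nat.choose_zero_right, Nat.cast_one, mul_one,
    zero_add, pow_one, add_tsub_cancel_right, Nat.choose_one_right, Nat.reduceAdd]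
  ring

theorem stmt2_general {n m v e : ℕ} (hn : Odd n) (hm : n ^ v ∣ m) (he : 0 < e) (x y : R) :
    (x + (n : R) ^ e * y) ^ m - x ^ m - (m : R) * (n : R) ^ e * x ^ (m - 1) * y ∈
      Ideal.span {(n : R) ^ (e + v + 1)} := by
  have hlinear : (m : R) * (n : R) ^ e * x ^ (m - 1) * y = m * x ^ (m - 1) * (n ^ e * y) := by
    ring
  rw [Ideal.mem_span_singleton, hlinear, add_pow_sub_pow_sub_eq_sum]
  refine Finset.dvd_sum fun k hk => ?_
  have hcoeff : (n : R) ^ (e + v + 1) ∣ m.choose k * n ^ (e * k) :=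
    mod_cast Nat.cast_dvd_cast (α := R)
      (pow_dvd_choose_mul_pow hn hm he (Finset.mem_Ico.1 hk).1)
  calc (n : R) ^ (e + v + 1)
      ∣ m.choose k * n ^ (e * k) * (y ^ k * x ^ (m - k)) := hcoeff.mul_right _
    _ = (n ^ e * y) ^ k * x ^ (m - k) * m.choose k := by ring

end CommRing

/-- For an odd prime `p`, a commutative ring `R`, `x y : R` and positive integers `m, e`,
the element `(x + p^e y)^m - x^m - m p^e x^(m-1) y` lies in the ideal generated by
`p^(e + val_p(m) + 1)`. -/
theorem stmt2 (p : ℕ) (hp : p.Prime) (hodd : Odd p) {R : Type*} [CommRing R]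
    (x y : R) (m e : ℕ) (hm : 0 < m) (he : 0 < e) :
    (x + (p : R) ^ e * y) ^ m - x ^ m - (m : R) * (p : R) ^ e * x ^ (m - 1) * y ∈
      Ideal.span {(p : R) ^ (e + padicValNat p m + 1)} :=
  stmt2_general hodd pow_padicValNat_dvd he x y
end

section
/- In the setup below, each of the elements ε_1, …, ε_e is a unit of the ring ℤ_p of p-adic integers. -/
/-!
If `p ^ j ∣ n`, the absorption identity `n * C(n - 1, k - 1) = k * C(n, k)` shows that `p ∣ C(n, k)`
unless `p ^ j ∣ k`. By Pascal's rule, `C(n - 1, k)` is then `(-1) ^ k` modulo `p` for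
`k < p ^ j`, and absorption once more gives `val_p C(n, p ^ j) = val_p n - j`.

For `n = m / p` and `j = e - 1` this valuation is exactly the power of `p` on the left-hand side of
the equation for `ε 1`, so `ε 1` is a unit. Since `p ^ (e - 1)` divides `(m - p ^ e) / p` but not
`p ^ (e - k - 1)`, the factor relating `ε k` to `ε (k + 1)` is `-1` modulo `p`, hence a unit.
-/

section Choose

variable {p : ℕ} [hp : Fact p.Prime]

theorem prime_dvd_choose_of_pow_dvd_of_not_pow_dvd {n j k : ℕ} (hn : p ^ j ∣ n)
    (hk : ¬p ^ j ∣ k) : p ∣ n.choose k := by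
  obtain _ | k := k
  · exact absurd (dvd_zero _) hk
  obtain _ | n := n
  · exact Nat.choose_zero_succ k ▸ dvd_zero p
  have hmul : p ^ j ∣ (n + 1).choose (k + 1) * (k + 1) :=
    Nat.add_one_mul_choose_eq n k ▸ hn.mul_right _
  by_contra hchoose
  exact hk (((hp.out.coprime_iff_not_dvd.2 hchoose).pow_left j).dvd_of_dvd_mul_left hmul)

theorem not_prime_dvd_choose_of_pow_dvd_add_one {n j k : ℕ} (hn : p ^ j ∣ n + 1)
    (hk : k < p ^ j) : ¬p ∣ n.choose k := by
  induction k with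
  | zero => simpa only [Nat.choose_zero_right] using hp.out.not_dvd_one
  | succ k ih =>
    have hsum : p ∣ n.choose k + n.choose (k + 1) :=
      Nat.choose_succ_succ' n k ▸ prime_dvd_choose_of_pow_dvd_of_not_pow_dvd hn
        (Nat.not_dvd_of_pos_of_lt k.succ_pos hk)
    exact fun h ↦ ih (Nat.lt_of_succ_lt hk) ((Nat.dvd_add_left h).1 hsum)

theorem padicValNat_choose_prime_pow {n j : ℕ} (hn : p ^ j ∣ n) :
    padicValNat p (n.choose (p ^ j)) = padicValNat p n - j := by
  obtain _ | n := n
  · simp [Nat.choose_eq_zero_of_lt (pow_pos hp.out.pos j)]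
  obtain ⟨q, hq⟩ : ∃ q, p ^ j = q + 1 := Nat.exists_eq_add_one.2 (pow_pos hp.out.pos j)
  have hndvd : ¬p ∣ n.choose q :=
    not_prime_dvd_choose_of_pow_dvd_add_one hn (hq ▸ q.lt_succ_self)
  have hpred : n.choose q ≠ 0 := fun h ↦ hndvd (h ▸ dvd_zero p)
  have hchoose : (n + 1).choose (p ^ j) ≠ 0 := (Nat.choose_pos (Nat.le_of_dvd n.succ_pos hn)).ne'
  have habsorb : (n + 1) * n.choose q = (n + 1).choose (p ^ j) * p ^ j :=
    hq ▸ Nat.add_one_mul_choose_eq n q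
  have hval := congrArg (padicValNat p) habsorb
  rw [padicValNat.mul n.add_one_ne_zero hpred, padicValNat.eq_zero_of_not_dvd hndvd,
    padicValNat.mul hchoose (pow_ne_zero j hp.out.ne_zero), padicValNat.prime_pow] at hval
  omega

end Choose

section Units

variable {p : ℕ} [hp : Fact p.Prime] {R : Type*} [CommRing R]

theorem isUnit_of_prime_pow_padicValNat_mul_eq (hreg : IsLeftRegular (p : R))
    (hunit : ∀ n : ℕ, ¬p ∣ n → IsUnit (n : R)) {n : ℕ} (hn : n ≠ 0) {x u : R} (hu : IsUnit u)
    (hx : (p : R) ^ padicValNat p n * x = u * n) : IsUnit x := by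
  obtain ⟨c, hc⟩ : p ^ padicValNat p n ∣ n := pow_padicValNat_dvd
  have hpc : ¬p ∣ c := by
    rintro ⟨d, rfl⟩
    exact pow_succ_padicValNat_not_dvd hn ⟨d, by rwa [pow_succ, mul_assoc]⟩
  have hxc : x = u * c := hreg.pow (padicValNat p n) <| calc
    (p : R) ^ padicValNat p n * x = u * n := hx
    _ = u * ((p ^ padicValNat p n * c : ℕ) : R) := by rw [← hc]
    _ = (p : R) ^ padicValNat p n * (u * c) := by push_cast; ring
  exact hxc ▸ hu.mul (hunit c hpc)

theorem isUnit_one_add_choose_of_pow_dvd (hunit : ∀ n : ℕ, ¬p ∣ n → IsUnit (n : R))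
    {n j k : ℕ} (hn : p ^ j ∣ n) (hk : ¬p ^ j ∣ k) : IsUnit (1 + (n.choose k : R)) := by
  have hndvd : ¬p ∣ 1 + n.choose k := fun h ↦ hp.out.not_dvd_one <|
    (Nat.dvd_add_left (prime_dvd_choose_of_pow_dvd_of_not_pow_dvd hn hk)).1 h
  exact_mod_cast hunit _ hndvd

-- The hypotheses on `R` say that it is a `p`-torsion-free algebra over the localization `ℤ_(p)`.
theorem stmt5_general (hreg : IsLeftRegular (p : R)) (hunit : ∀ n : ℕ, ¬p ∣ n → IsUnit (n : R))
    {m e : ℕ} (he : e ≤ padicValNat p m) (δ : Rˣ) (ε : ℕ → R)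
    (hε1 : (p : R) ^ (padicValNat p m - e) * ε 1 =
      -(δ : R) * ((m / p).choose (p ^ (e - 1)) : R))
    (hεrec : ∀ k, 1 ≤ k → k ≤ e - 1 →
      ε (k + 1) = -ε k * (1 + (((m - p ^ e) / p).choose (p ^ (e - k - 1)) : R))) :
    ∀ k, 1 ≤ k → k ≤ e → IsUnit (ε k) := by
  intro k hk hke
  have hm : m ≠ 0 := by
    rintro rfl
    rw [padicValNat_zero_right] at he
    omega
  have hpe : p ^ (e - 1) * p = p ^ e := pow_sub_one_mul (by omega) p
  have hem : p ^ e ∣ m := (pow_dvd_pow p he).trans pow_padicValNat_dvd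
  have hdiv {n : ℕ} (hn : p ^ e ∣ n) : p ^ (e - 1) ∣ n / p :=
    Nat.dvd_div_of_mul_dvd (by rwa [mul_comm, hpe])
  induction k, hk using Nat.le_induction with
  | base =>
    have hle : p ^ (e - 1) ≤ m / p :=
      (Nat.le_div_iff_mul_le hp.out.pos).2 (hpe ▸ Nat.le_of_dvd (Nat.pos_of_ne_zero hm) hem)
    have hval : padicValNat p ((m / p).choose (p ^ (e - 1))) = padicValNat p m - e := by
      rw [padicValNat_choose_prime_pow (hdiv hem),
        padicValNat.div (dvd_of_one_le_padicValNat (hke.trans he))]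
      omega
    exact isUnit_of_prime_pow_padicValNat_mul_eq hreg hunit (Nat.choose_pos hle).ne' δ.isUnit.neg
      (hval ▸ hε1)
  | succ k hk ih =>
    have hndvd : ¬p ^ (e - 1) ∣ p ^ (e - k - 1) := by
      rw [Nat.pow_dvd_pow_iff_le_right hp.out.one_lt]
      omega
    rw [hεrec k hk (by omega)]
    exact (ih (by omega)).neg.mul
      (isUnit_one_add_choose_of_pow_dvd hunit (hdiv (Nat.dvd_sub hem dvd_rfl)) hndvd)

end Units

theorem isUnit_padicInt_natCast_of_not_dvd {p : ℕ} [hp : Fact p.Prime] {n : ℕ} (hn : ¬p ∣ n) :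
    IsUnit (n : ℤ_[p]) :=
  PadicInt.isUnit_iff.2 (PadicInt.norm_natCast_eq_one_iff.2 (hp.out.coprime_iff_not_dvd.2 hn))

/-- Let `p` be an odd prime, `m` a positive integer, `1 ≤ e ≤ val_p(m)`, and `δ` a unit of
`ℤ_p`. Suppose `ε : ℕ → ℤ_p` satisfies `p^(val_p(m) - e) * ε 1 = -δ * C(m/p, p^(e-1))` and
`ε (k+1) = -ε k * (1 + C((m - p^e)/p, p^(e-k-1)))` for `1 ≤ k ≤ e - 1`.
Then `ε 1, …, ε e` are all units of `ℤ_p`. -/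
theorem stmt5 (p : ℕ) [hp : Fact p.Prime] (hodd : Odd p)
    (m e : ℕ) (hm : 0 < m) (he1 : 1 ≤ e) (he2 : e ≤ padicValNat p m)
    (δ : ℤ_[p]ˣ) (ε : ℕ → ℤ_[p])
    (hε1 : (p : ℤ_[p]) ^ (padicValNat p m - e) * ε 1 =
      -(δ : ℤ_[p]) * ((m / p).choose (p ^ (e - 1)) : ℤ_[p]))
    (hεrec : ∀ k, 1 ≤ k → k ≤ e - 1 →
      ε (k + 1) = -ε k * (1 + (((m - p ^ e) / p).choose (p ^ (e - k - 1)) : ℤ_[p]))) :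
    ∀ k, 1 ≤ k → k ≤ e → IsUnit (ε k) :=
  stmt5_general (IsLeftCancelMulZero.mul_left_cancel_of_ne_zero (Nat.cast_ne_zero.2 hp.out.ne_zero))
    (fun _ ↦ isUnit_padicInt_natCast_of_not_dvd) he2 δ ε hε1 hεrec
end

section
/- In the setup below, for every integer k with 1 ≤ k ≤ e−1 one has ε_{k+1} ≡ −ε_k (mod p^k), i.e., ε_{k+1} + ε_k lies in the ideal p^k·ℤ_p. -/
/-!
The identity `r * C(n, r) = n * C(n - 1, r - 1)` shows that `n` divides `r * C(n, r)`, so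
`p ^ d ∣ n` forces `p ^ k ∣ C(n, p ^ (d - k))`. With `d = e - 1` and `n = (m - p ^ e) / p`, the
correction term `-ε k * C(n, p ^ (d - k))` of the recursion therefore vanishes modulo `p ^ k`.
-/

theorem dvd_choose_mul_self (n r : ℕ) : n ∣ n.choose r * r := by
  cases r with
  | zero => simp
  | succ r =>
    cases n with
    | zero => simp
    | succ n => exact Dvd.intro _ (Nat.add_one_mul_choose_eq n r)

theorem dvd_choose_of_mul_dvd {a n r : ℕ} (hr : 0 < r) (h : a * r ∣ n) : a ∣ n.choose r :=
  Nat.dvd_of_mul_dvd_mul_right hr (h.trans (dvd_choose_mul_self n r))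

theorem pow_dvd_choose_pow_sub {p n d k : ℕ} (hp : 0 < p) (hn : p ^ d ∣ n) (hk : k ≤ d) :
    p ^ k ∣ n.choose (p ^ (d - k)) :=
  dvd_choose_of_mul_dvd (pow_pos hp _) (by rwa [pow_mul_pow_sub p hk])

theorem pow_sub_one_dvd_div {p m e : ℕ} (he : e ≠ 0) (h : p ^ e ∣ m) : p ^ (e - 1) ∣ m / p :=
  Nat.dvd_div_of_mul_dvd (by rwa [mul_pow_sub_one he])

theorem stmt6_general {R : Type*} [Ring R] {p n d k : ℕ} (hp : 0 < p) (hn : p ^ d ∣ n)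
    (hk : k ≤ d) {ε : ℕ → R}
    (hε : ε (k + 1) = -ε k * (1 + (n.choose (p ^ (d - k)) : R))) :
    ε (k + 1) + ε k ∈ Ideal.span {(p : R) ^ k} := by
  have hchoose : (n.choose (p ^ (d - k)) : R) ∈ Ideal.span {(p : R) ^ k} := by
    obtain ⟨c, hc⟩ := pow_dvd_choose_pow_sub hp hn hk
    exact Ideal.mem_span_singleton'.mpr ⟨c, by rw [hc, mul_comm, Nat.cast_mul, Nat.cast_pow]⟩
  have hsum : ε (k + 1) + ε k = -ε k * (n.choose (p ^ (d - k)) : R) := by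
    rw [hε, mul_one_add, neg_add_eq_sub, sub_add_cancel]
  exact hsum ▸ Ideal.mul_mem_left _ _ hchoose

/-- Let `p` be an odd prime, `m` a positive integer, `1 ≤ e ≤ val_p(m)`, and `δ` a unit of
`ℤ_p`. Suppose `ε : ℕ → ℤ_p` satisfies `p^(val_p(m) - e) * ε 1 = -δ * C(m/p, p^(e-1))` and
`ε (k+1) = -ε k * (1 + C((m - p^e)/p, p^(e-k-1)))` for `1 ≤ k ≤ e - 1`.
Then for every `1 ≤ k ≤ e - 1` one has `ε (k+1) ≡ -ε k (mod p^k)`. -/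
theorem stmt6 (p : ℕ) [hp : Fact p.Prime] (hodd : Odd p)
    (m e : ℕ) (hm : 0 < m) (he1 : 1 ≤ e) (he2 : e ≤ padicValNat p m)
    (δ : ℤ_[p]ˣ) (ε : ℕ → ℤ_[p])
    (hε1 : (p : ℤ_[p]) ^ (padicValNat p m - e) * ε 1 =
      -(δ : ℤ_[p]) * ((m / p).choose (p ^ (e - 1)) : ℤ_[p]))
    (hεrec : ∀ k, 1 ≤ k → k ≤ e - 1 →
      ε (k + 1) = -ε k * (1 + (((m - p ^ e) / p).choose (p ^ (e - k - 1)) : ℤ_[p]))) :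
    ∀ k, 1 ≤ k → k ≤ e - 1 →
      ε (k + 1) + ε k ∈ Ideal.span {(p : ℤ_[p]) ^ k} := by
  intro k hk hke
  have hpm : p ^ e ∣ m - p ^ e :=
    Nat.dvd_sub ((pow_dvd_pow p he2).trans pow_padicValNat_dvd) dvd_rfl
  exact stmt6_general hp.out.pos (pow_sub_one_dvd_div (Nat.one_le_iff_ne_zero.mp he1) hpm) hke
    (Nat.sub_right_comm e 1 k ▸ hεrec k hk hke)
end

section
/- In the setup below, if in addition val_p(m − p^e) > e, then for every integer k with 1 ≤ k ≤ e−1 one has ε_{k+1} ≡ −ε_k (mod p^{k+1}), i.e., ε_{k+1} + ε_k lies in the ideal p^{k+1}·ℤ_p. -/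
theorem dvd_choose_of_mul_dvd_s7 {n k d : ℕ} (hk : k ≠ 0) (h : k * d ∣ n) : d ∣ n.choose k := by
  obtain ⟨j, rfl⟩ := Nat.exists_eq_add_one_of_ne_zero hk
  cases n with
  | zero => exact dvd_zero d
  | succ n =>
    have habsorb : (j + 1) * d ∣ (j + 1) * (n + 1).choose (j + 1) :=
      calc (j + 1) * d ∣ (n + 1) * n.choose j := h.mul_right _
        _ = (j + 1) * (n + 1).choose (j + 1) := by rw [Nat.add_one_mul_choose_eq, mul_comm]
    exact Nat.dvd_of_mul_dvd_mul_left j.succ_pos habsorb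

theorem stmt7_general {R : Type*} [CommRing R] {q n e : ℕ} (hq : q ≠ 0) (hn : q ^ e ∣ n)
    {ε : ℕ → R}
    (hεrec : ∀ k, 1 ≤ k → k ≤ e - 1 →
      ε (k + 1) = -ε k * (1 + (n.choose (q ^ (e - k - 1)) : R))) :
    ∀ k, 1 ≤ k → k ≤ e - 1 → ε (k + 1) + ε k ∈ Ideal.span {(q : R) ^ (k + 1)} := by
  intro k hk hke
  have hchoose : q ^ (k + 1) ∣ n.choose (q ^ (e - k - 1)) := by
    refine dvd_choose_of_mul_dvd_s7 (pow_ne_zero _ hq) ?_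
    rwa [← pow_add, show e - k - 1 + (k + 1) = e by lia]
  have hsum : ε (k + 1) + ε k = -ε k * (n.choose (q ^ (e - k - 1)) : R) := by
    rw [hεrec k hk hke]
    ring
  have hcast : (q : R) ^ (k + 1) ∣ (n.choose (q ^ (e - k - 1)) : R) :=
    mod_cast Nat.cast_dvd_cast (α := R) hchoose
  rw [Ideal.mem_span_singleton, hsum]
  exact hcast.mul_left _

/-- Let `p` be an odd prime, `m` a positive integer, `1 ≤ e ≤ val_p(m)`, and `δ` a unit of
`ℤ_p`. Suppose `ε : ℕ → ℤ_p` satisfies `p^(val_p(m) - e) * ε 1 = -δ * C(m/p, p^(e-1))` and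
`ε (k+1) = -ε k * (1 + C((m - p^e)/p, p^(e-k-1)))` for `1 ≤ k ≤ e - 1`.
If moreover `m > p^e` and `val_p(m - p^e) > e`, then for every `1 ≤ k ≤ e - 1` one has
`ε (k+1) ≡ -ε k (mod p^(k+1))`. -/
theorem stmt7 (p : ℕ) [hp : Fact p.Prime] (hodd : Odd p)
    (m e : ℕ) (hm : 0 < m) (he1 : 1 ≤ e) (he2 : e ≤ padicValNat p m)
    (δ : ℤ_[p]ˣ) (ε : ℕ → ℤ_[p])
    (hε1 : (p : ℤ_[p]) ^ (padicValNat p m - e) * ε 1 =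
      -(δ : ℤ_[p]) * ((m / p).choose (p ^ (e - 1)) : ℤ_[p]))
    (hεrec : ∀ k, 1 ≤ k → k ≤ e - 1 →
      ε (k + 1) = -ε k * (1 + (((m - p ^ e) / p).choose (p ^ (e - k - 1)) : ℤ_[p])))
    (hme : p ^ e < m) (hval : e < padicValNat p (m - p ^ e)) :
    ∀ k, 1 ≤ k → k ≤ e - 1 →
      ε (k + 1) + ε k ∈ Ideal.span {(p : ℤ_[p]) ^ (k + 1)} := by
  have hdvd : p ^ e ∣ (m - p ^ e) / p :=
    Nat.dvd_div_of_mul_dvd (pow_succ' p e ▸ (pow_dvd_pow p hval).trans pow_padicValNat_dvd)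
  exact stmt7_general hp.out.ne_zero hdvd hεrec
end

section
/- Let p be a prime, e a positive integer, and M a positive integer divisible by p^{e−1}. Let R be a commutative ring and x, t, β ∈ R. Then (x + β^{p(p−1)}·t)^M − x^M − C(M, p^{e−1})·β^{p^e(p−1)}·x^{M − p^{e−1}}·t^{p^{e−1}} lies in the ideal of R generated by β^{p^{e+1}−1} and the element p^{val_p(M)−e+2}·1. -/
/-!
Expand `(x + y) ^ n` with `y = β ^ (p * (p - 1)) * t` and `q = p ^ (e - 1)`, and consider a term
`n.choose k * y ^ k` with `k ≠ 0, q`. If `q ∣ k` then `2 * q ≤ k`, so `y ^ k` carries the power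
`2 * p ^ e * (p - 1) ≥ p ^ (e + 1)` of `β`. If `q ∤ k` then `k` has `p`-adic valuation at most
`e - 2`, and `val_p (n.choose k) ≥ val_p n - val_p k`.
-/

theorem prime_pow_dvd_choose_of_not_pow_dvd {p n k v a : ℕ} (hp : p.Prime) (hn : p ^ v ∣ n)
    (hk : ¬ p ^ a ∣ k) : p ^ (v + 1 - a) ∣ n.choose k := by
  have hk_lt : emultiplicity p k < a := emultiplicity_lt_iff_not_dvd.2 hk
  have hv_le : (v : ℕ∞) ≤ emultiplicity p (n.choose k) + emultiplicity p k :=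
    (le_emultiplicity_of_pow_dvd hn).trans (hp.emultiplicity_le_emultiplicity_choose_add n k)
  rw [pow_dvd_iff_le_emultiplicity]
  generalize emultiplicity p (n.choose k) = c at hv_le ⊢
  lift emultiplicity p k to ℕ using hk_lt.ne_top with b
  cases c with
  | top => exact le_top
  | coe c =>
    norm_cast at hk_lt hv_le ⊢
    omega

section Semiring

variable {S : Type*} [Semiring S] {x y : S}

theorem add_pow_eq_of_choose_mul_pow_eq_zero (hxy : Commute x y) {n m : ℕ} (hm : m ≠ 0)
    (h : ∀ k, k ≠ 0 → k ≠ m → (n.choose k : S) * y ^ k = 0) :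
    (x + y) ^ n = x ^ n + y ^ m * x ^ (n - m) * n.choose m := by
  rw [add_comm x, hxy.symm.add_pow, Finset.sum_eq_add 0 m hm.symm]
  · simp
  · rintro k - ⟨hk0, hkm⟩
    rw [← Nat.cast_comm, ← mul_assoc, h k hk0 hkm, zero_mul]
  · simp
  · intro hmn
    rw [Nat.choose_eq_zero_of_lt (by simpa [Nat.lt_succ_iff] using hmn), Nat.cast_zero, mul_zero]

theorem add_pow_eq_of_pow_two_mul_prime_pow_eq_zero (hxy : Commute x y) {p n v a : ℕ}
    (hp : p.Prime) (hn : p ^ v ∣ n) (hy : y ^ (2 * p ^ a) = 0) (hpS : (p : S) ^ (v + 1 - a) = 0) :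
    (x + y) ^ n = x ^ n + y ^ p ^ a * x ^ (n - p ^ a) * n.choose (p ^ a) := by
  refine add_pow_eq_of_choose_mul_pow_eq_zero hxy (pow_ne_zero a hp.ne_zero)
    fun k hk0 hkq ↦ ?_
  by_cases hqk : p ^ a ∣ k
  · have hle : 2 * p ^ a ≤ k := by
      obtain ⟨c, rfl⟩ := hqk
      rw [mul_comm]
      refine Nat.mul_le_mul_left _ ((Nat.two_le_iff c).2 ⟨?_, ?_⟩)
      · rintro rfl; simp at hk0
      · rintro rfl; simp at hkq
    rw [pow_eq_zero_of_le hle hy, mul_zero]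
  · have hchoose : (n.choose k : S) = 0 := by
      have h := Nat.cast_dvd_cast (α := S) (prime_pow_dvd_choose_of_not_pow_dvd hp hn hqk)
      rwa [Nat.cast_pow, hpS, zero_dvd_iff] at h
    rw [hchoose, zero_mul]

end Semiring

theorem add_pow_sub_add_mem_span {R : Type*} [CommRing R] (x y : R) {p n v : ℕ} (a : ℕ)
    (hp : p.Prime) (hn : p ^ v ∣ n) :
    (x + y) ^ n - (x ^ n + y ^ p ^ a * x ^ (n - p ^ a) * n.choose (p ^ a)) ∈
      Ideal.span {y ^ (2 * p ^ a), (p : R) ^ (v + 1 - a)} := by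
  set I : Ideal R := Ideal.span {y ^ (2 * p ^ a), (p : R) ^ (v + 1 - a)}
  have hy : Ideal.Quotient.mk I y ^ (2 * p ^ a) = 0 := by
    rw [← map_pow, Ideal.Quotient.eq_zero_iff_mem]
    exact Ideal.subset_span (Set.mem_insert _ _)
  have hpI : (p : R ⧸ I) ^ (v + 1 - a) = 0 := by
    rw [← map_natCast (Ideal.Quotient.mk I), ← map_pow, Ideal.Quotient.eq_zero_iff_mem]
    exact Ideal.subset_span (Set.mem_insert_of_mem _ rfl)
  rw [← Ideal.Quotient.mk_eq_mk_iff_sub_mem]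
  simpa only [map_add, map_mul, map_pow, map_natCast] using
    add_pow_eq_of_pow_two_mul_prime_pow_eq_zero (Commute.all _ _) hp hn hy hpI

theorem pow_add_two_le_mul_sub_one_mul_two_mul_pow {p : ℕ} (hp : 2 ≤ p) (a : ℕ) :
    p ^ (a + 2) ≤ p * (p - 1) * (2 * p ^ a) :=
  calc p ^ (a + 2) = p * p ^ a * p := by ring
    _ ≤ p * p ^ a * (2 * (p - 1)) := Nat.mul_le_mul_left _ (by omega)
    _ = p * (p - 1) * (2 * p ^ a) := by ring

/-- Let `p` be a prime, `e` a positive integer, `M` a positive integer divisible by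
`p^(e-1)`, `R` a commutative ring and `x t β : R`. Then
`(x + β^(p(p-1)) t)^M - x^M - C(M, p^(e-1)) β^(p^e (p-1)) x^(M - p^(e-1)) t^(p^(e-1))`
lies in the ideal generated by `β^(p^(e+1) - 1)` and `p^(val_p(M) - e + 2)`. -/
theorem stmt8 (p e M : ℕ) (hp : p.Prime) (he : 0 < e) (hM : 0 < M)
    (hdvd : p ^ (e - 1) ∣ M) {R : Type*} [CommRing R] (x t β : R) :
    (x + β ^ (p * (p - 1)) * t) ^ M - x ^ M -
        (M.choose (p ^ (e - 1)) : R) * β ^ (p ^ e * (p - 1)) * x ^ (M - p ^ (e - 1)) *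
          t ^ (p ^ (e - 1)) ∈
      Ideal.span {β ^ (p ^ (e + 1) - 1), (p : R) ^ (padicValNat p M + 2 - e)} := by
  obtain ⟨a, rfl⟩ := Nat.exists_eq_add_one.2 he
  have hβ_dvd : β ^ (p ^ (a + 2) - 1) ∣ (β ^ (p * (p - 1)) * t) ^ (2 * p ^ a) := by
    rw [mul_pow, ← pow_mul]
    exact (pow_dvd_pow β ((Nat.sub_le _ 1).trans
      (pow_add_two_le_mul_sub_one_mul_two_mul_pow hp.two_le a))).mul_right _
  have hval : padicValNat p M + 2 - (a + 1) = padicValNat p M + 1 - a := by omega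
  have hspan : Ideal.span {(β ^ (p * (p - 1)) * t) ^ (2 * p ^ a),
      (p : R) ^ (padicValNat p M + 1 - a)} ≤
      Ideal.span {β ^ (p ^ (a + 2) - 1), (p : R) ^ (padicValNat p M + 1 - a)} :=
    Ideal.span_le.2 (Set.pair_subset
      (Ideal.mem_of_dvd _ hβ_dvd (Ideal.subset_span (Set.mem_insert _ _)))
      (Ideal.subset_span (Set.mem_insert_of_mem _ rfl)))
  have hmem := hspan (add_pow_sub_add_mem_span x (β ^ (p * (p - 1)) * t) a hp pow_padicValNat_dvd)
  rw [Nat.add_sub_cancel, hval]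
  convert hmem using 1
  ring
end

section
/- Let p be an odd prime and m a positive integer, and set v = val_p(m). Let R be a commutative ring and x, t, b, β ∈ R. Then (x + p·t + β^{p−2}·b)^m − x^m − m·β^{p−2}·x^{m−1}·b lies in the ideal of R generated by β^{p−1} and the element p^{v+1}·1. -/
/-!
Put `a = x + p t` and `y = β ^ (p - 2) b`; since `p - 1 ≤ 2 (p - 2)`, the square of `y` is a
multiple of `β ^ (p - 1)`. Modulo `y ^ 2`, `(a + y) ^ m` is `a ^ m + m a ^ (m - 1) y`. As `a` is
congruent to `x` modulo `p` and `p ^ v` divides `m`, replacing `a` by `x` changes both `a ^ m` and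
`m a ^ (m - 1)` by multiples of `p ^ (v + 1)`: the first because each of the `v` successive `p`-th
powers gains a factor `p`, the second because `m` already supplies `p ^ v`.
-/

section

variable {R : Type*} [CommRing R] {p m v : ℕ}

theorem pow_succ_dvd_pow_sub_pow_of_dvd_sub {a x : R} (hm : p ^ v ∣ m) (hax : (p : R) ∣ a - x) :
    (p : R) ^ (v + 1) ∣ a ^ m - x ^ m := by
  obtain ⟨n, rfl⟩ := hm
  rw [pow_mul, pow_mul]
  exact (dvd_sub_pow_of_dvd_sub hax v).trans (sub_dvd_pow_sub_pow _ _ n)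

theorem pow_succ_dvd_natCast_mul_pow_sub_pow_of_dvd_sub {a x : R} (hm : p ^ v ∣ m)
    (hax : (p : R) ∣ a - x) (n : ℕ) :
    (p : R) ^ (v + 1) ∣ m * (a ^ n - x ^ n) := by
  rw [pow_succ]
  exact mul_dvd_mul (mod_cast Nat.cast_dvd_cast hm) (hax.trans (sub_dvd_pow_sub_pow a x n))

theorem add_pow_sub_pow_sub_mem_of_dvd_sub {I : Ideal R} {a x y : R} (hm : p ^ v ∣ m)
    (hax : (p : R) ∣ a - x) (hp : (p : R) ^ (v + 1) ∈ I) (hy : y ^ 2 ∈ I) :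
    (a + y) ^ m - x ^ m - m * y * x ^ (m - 1) ∈ I := by
  have taylor : (a + y) ^ m - a ^ (m - 1) * y * m - a ^ m ∈ I :=
    I.mem_of_dvd (sq_dvd_add_pow_sub_sub y a m) hy
  have constant_term : a ^ m - x ^ m ∈ I :=
    I.mem_of_dvd (pow_succ_dvd_pow_sub_pow_of_dvd_sub hm hax) hp
  have linear_term : y * (m * (a ^ (m - 1) - x ^ (m - 1))) ∈ I :=
    I.mul_mem_left y <|
      I.mem_of_dvd (pow_succ_dvd_natCast_mul_pow_sub_pow_of_dvd_sub hm hax (m - 1)) hp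
  convert I.add_mem (I.add_mem taylor constant_term) linear_term using 1
  ring

theorem stmt9_general {k l : ℕ} (hm : p ^ v ∣ m) (hl : l ≤ 2 * k) (x t b β : R) :
    (x + (p : R) * t + β ^ k * b) ^ m - x ^ m - (m : R) * β ^ k * x ^ (m - 1) * b ∈
      Ideal.span {β ^ l, (p : R) ^ (v + 1)} := by
  have hy : (β ^ k * b) ^ 2 ∈ Ideal.span {β ^ l, (p : R) ^ (v + 1)} := by
    rw [mul_pow, ← pow_mul']
    exact Ideal.mul_mem_right _ _ <|
      Ideal.mem_of_dvd _ (pow_dvd_pow β hl) (Ideal.subset_span (Set.mem_insert _ _))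
  have hp : (p : R) ^ (v + 1) ∈ Ideal.span {β ^ l, (p : R) ^ (v + 1)} :=
    Ideal.subset_span (Set.mem_insert_of_mem _ (Set.mem_singleton _))
  have hax : (p : R) ∣ x + p * t - x := ⟨t, add_sub_cancel_left x _⟩
  convert add_pow_sub_pow_sub_mem_of_dvd_sub hm hax hp hy using 2
  ring

end

/-- Let `p` be an odd prime, `m` a positive integer, `v = val_p(m)`, `R` a commutative ring
and `x t b β : R`. Then `(x + p t + β^(p-2) b)^m - x^m - m β^(p-2) x^(m-1) b` lies in the
ideal generated by `β^(p-1)` and `p^(v+1)`. -/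
theorem stmt9 (p : ℕ) (hp : p.Prime) (hodd : Odd p) (m : ℕ) (hm : 0 < m)
    {R : Type*} [CommRing R] (x t b β : R) :
    (x + (p : R) * t + β ^ (p - 2) * b) ^ m - x ^ m -
        (m : R) * β ^ (p - 2) * x ^ (m - 1) * b ∈
      Ideal.span {β ^ (p - 1), (p : R) ^ (padicValNat p m + 1)} := by
  obtain ⟨j, rfl⟩ := hodd
  exact stmt9_general pow_padicValNat_dvd (by omega) x t b β
end

section
/- Let P = ∏_p ℤ_p be the product over all primes p of the rings of p-adic integers, regarded as a ℤ-module, and let φ : ℚ × P → ℚ ⊗_ℤ P be the ℤ-linear map defined by φ(q, a) = 1 ⊗ a − q·(1 ⊗ 1), where 1 ∈ P is the element all of whose components are 1. Then φ is surjective, and its kernel is exactly the image of the ℤ-linear map ℤ → ℚ × P sending n to (n, n·1); in other words, the sequence 0 → ℤ → ℚ × ∏_p ℤ_p → ℚ ⊗_ℤ ∏_p ℤ_p → 0 is exact (the arithmetic fracture square for ℤ). -/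
open TensorProduct

instance (p : Nat.Primes) : Fact (Nat.Prime (p : ℕ)) := ⟨p.2⟩

/-! If `s` is regular on `A` and on an `A`-algebra `R` and `A / s → R / sR` is bijective for all
`s` in a multiplicative set `S`, then `0 → A → S⁻¹A × R → S⁻¹A ⊗ R → 0` is exact. Surjectivity on
the right: in `(n / s) ⊗ a` write `a = m + s b`, which gives `(m n / s) ⊗ 1 + 1 ⊗ n b`. Exactness
in the middle: if `1 ⊗ a = (n / s) ⊗ 1`, then `s a = n` in `R`, so `s ∣ n` in `A`, and cancelling
`s` shows that `n / s` and `a` are the same element of `A`.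

The condition on `s` is multiplicative, so for `A = ℤ` and `R = ∏ p, ℤ_p` it is enough to treat a
prime `q`. There only the factor `ℤ_q` matters, as `q` is a unit in all the others, and
`ℤ / q = ℤ_q / q`. -/

section AnalyticIso

variable {A : Type*} [CommRing A]

/-- `A → R` is an analytic isomorphism along `s`: `s` is a nonzerodivisor on `A` and on `R`, and
`A / s → R / sR` is bijective, where injectivity and surjectivity are spelled out on elements. This
is the condition under which localizing at `s` gives a fracture square. -/
structure IsAnalyticIsoAlong (R : Type*) [Ring R] [Algebra A R] (s : A) : Prop where
  isSMulRegular_base : IsSMulRegular A s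
  isSMulRegular : IsSMulRegular R s
  dvd_of_algebraMap_eq_smul {n : A} {b : R} : algebraMap A R n = s • b → s ∣ n
  exists_eq_algebraMap_add_smul (a : R) : ∃ (n : A) (b : R), a = algebraMap A R n + s • b

namespace IsAnalyticIsoAlong

variable {R : Type*} [Ring R] [Algebra A R] {s t : A}

lemma of_isUnit (hs : IsUnit s) : IsAnalyticIsoAlong R s where
  isSMulRegular_base := hs.isSMulRegular A
  isSMulRegular := hs.isSMulRegular R
  dvd_of_algebraMap_eq_smul _ := hs.dvd
  exists_eq_algebraMap_add_smul a := by
    obtain ⟨u, rfl⟩ := hs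
    exact ⟨0, (↑u⁻¹ : A) • a, by simp [smul_smul]⟩

lemma mul (hs : IsAnalyticIsoAlong R s) (ht : IsAnalyticIsoAlong R t) :
    IsAnalyticIsoAlong R (s * t) where
  isSMulRegular_base := hs.isSMulRegular_base.mul ht.isSMulRegular_base
  isSMulRegular := hs.isSMulRegular.smul ht.isSMulRegular
  dvd_of_algebraMap_eq_smul {n b} h := by
    rw [mul_smul] at h
    obtain ⟨m, rfl⟩ := hs.dvd_of_algebraMap_eq_smul h
    have hm : algebraMap A R m = t • b :=
      hs.isSMulRegular (by simpa [Algebra.smul_def] using h)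
    exact mul_dvd_mul_left s (ht.dvd_of_algebraMap_eq_smul hm)
  exists_eq_algebraMap_add_smul a := by
    obtain ⟨n, b, rfl⟩ := hs.exists_eq_algebraMap_add_smul a
    obtain ⟨m, c, rfl⟩ := ht.exists_eq_algebraMap_add_smul b
    exact ⟨n + s * m, c, by simp [Algebra.smul_def, mul_add, mul_assoc, add_assoc]⟩

lemma pi {I : Type*} {R : I → Type*} [∀ i, Ring (R i)] [∀ i, Algebra A (R i)] {j : I}
    (hj : IsAnalyticIsoAlong (R j) s) (hunit : ∀ i ≠ j, IsUnit (algebraMap A (R i) s)) :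
    IsAnalyticIsoAlong (∀ i, R i) s where
  isSMulRegular_base := hj.isSMulRegular_base
  isSMulRegular x y hxy := by
    refine funext fun i => ?_
    have hi : s • x i = s • y i := congrFun hxy i
    obtain rfl | hij := eq_or_ne i j
    · exact hj.isSMulRegular hi
    · rw [Algebra.smul_def, Algebra.smul_def] at hi
      exact (hunit i hij).mul_left_cancel hi
  dvd_of_algebraMap_eq_smul h := hj.dvd_of_algebraMap_eq_smul (congrFun h j)
  exists_eq_algebraMap_add_smul a := by
    obtain ⟨n, c, hc⟩ := hj.exists_eq_algebraMap_add_smul (a j)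
    have hcoord (i : I) : ∃ b : R i, a i = algebraMap A (R i) n + s • b := by
      obtain rfl | hij := eq_or_ne i j
      · exact ⟨c, hc⟩
      · obtain ⟨b, hb⟩ := (hunit i hij).dvd (a := a i - algebraMap A (R i) n)
        exact ⟨b, by rw [Algebra.smul_def, ← hb, add_sub_cancel]⟩
    choose b hb using hcoord
    exact ⟨n, b, funext hb⟩

end IsAnalyticIsoAlong

section FractureSquare

variable {S : Submonoid A} {K R : Type*} [CommRing K] [Algebra A K] [IsLocalization S K]
  [Ring R] [Algebra A R]

include S in
lemma exists_one_tmul_sub_tmul_one_eq (hS : ∀ s ∈ S, IsAnalyticIsoAlong R s) (x : K ⊗[A] R) :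
    ∃ (q : K) (a : R), (1 : K) ⊗ₜ[A] a - q ⊗ₜ[A] (1 : R) = x := by
  induction x with
  | zero => exact ⟨0, 0, by simp⟩
  | add x y hx hy =>
    obtain ⟨q, a, rfl⟩ := hx
    obtain ⟨r, b, rfl⟩ := hy
    exact ⟨q + r, a + b, by rw [tmul_add, add_tmul, add_sub_add_comm]⟩
  | tmul q a =>
    obtain ⟨n, s, rfl⟩ := IsLocalization.exists_mk'_eq S q
    obtain ⟨m, b, rfl⟩ := (hS s s.2).exists_eq_algebraMap_add_smul a
    set q := IsLocalization.mk' K n s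
    have hclear : (s : A) • q = n • (1 : K) := by
      rw [Algebra.smul_def, IsLocalization.mk'_spec', Algebra.algebraMap_eq_smul_one]
    refine ⟨-(m • q), n • b, ?_⟩
    calc (1 : K) ⊗ₜ[A] (n • b) - (-(m • q)) ⊗ₜ[A] (1 : R)
        = (m • q) ⊗ₜ[A] (1 : R) + (n • (1 : K)) ⊗ₜ[A] b := by
          rw [neg_tmul, sub_neg_eq_add, add_comm, smul_tmul n]
      _ = q ⊗ₜ[A] (m • (1 : R)) + q ⊗ₜ[A] ((s : A) • b) := by
          rw [← hclear, smul_tmul, smul_tmul]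
      _ = q ⊗ₜ[A] (algebraMap A R m + (s : A) • b) := by
          rw [← tmul_add, Algebra.algebraMap_eq_smul_one]

variable (S) in
lemma one_tmul_injective {M : Type*} [AddCommGroup M] [Module A M]
    (hS : ∀ s ∈ S, IsSMulRegular M s) : Function.Injective (TensorProduct.mk A K M 1) := by
  intro x y hxy
  obtain ⟨s, hs⟩ := (IsLocalizedModule.eq_iff_exists S (TensorProduct.mk A K M 1)).1 hxy
  exact hS s s.2 hs

include S in
lemma one_tmul_eq_tmul_one_iff (hS : ∀ s ∈ S, IsAnalyticIsoAlong R s) {q : K} {a : R} :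
    (1 : K) ⊗ₜ[A] a = q ⊗ₜ[A] (1 : R) ↔ ∃ n : A, algebraMap A K n = q ∧ algebraMap A R n = a := by
  constructor
  · intro h
    obtain ⟨n, s, rfl⟩ := IsLocalization.exists_mk'_eq S q
    have hn : algebraMap A R n = (s : A) • a := by
      refine one_tmul_injective (K := K) S (fun s hs => (hS s hs).isSMulRegular) ?_
      rw [mk_apply, mk_apply, tmul_smul, h, smul_tmul', Algebra.smul_def, IsLocalization.mk'_spec',
        Algebra.TensorProduct.tmul_one_eq_one_tmul]
    obtain ⟨m, rfl⟩ := (hS s s.2).dvd_of_algebraMap_eq_smul hn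
    refine ⟨m, (IsLocalization.mk'_mul_cancel_left m s).symm, (hS s s.2).isSMulRegular ?_⟩
    simpa [Algebra.smul_def] using hn
  · rintro ⟨n, rfl, rfl⟩
    exact (Algebra.TensorProduct.tmul_one_eq_one_tmul n).symm

variable (S) in
theorem stmt10_general (hS : ∀ s ∈ S, IsAnalyticIsoAlong R s)
    (ι : A →ₗ[A] K × R) (hι : ∀ n, ι n = (algebraMap A K n, algebraMap A R n))
    (φ : (K × R) →ₗ[A] K ⊗[A] R)
    (hφ : ∀ (q : K) (a : R), φ (q, a) = (1 : K) ⊗ₜ[A] a - q ⊗ₜ[A] (1 : R)) :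
    Function.Injective ι ∧ Function.Surjective φ ∧ LinearMap.ker φ = LinearMap.range ι := by
  have hS_nonZeroDivisors : S ≤ nonZeroDivisors A := fun s hs =>
    mem_nonZeroDivisors_iff_right.2 fun x hx =>
      (hS s hs).isSMulRegular_base.right_eq_zero_of_smul (by rwa [smul_eq_mul, mul_comm])
  refine ⟨fun m n h => ?_, fun x => ?_, ?_⟩
  · rw [hι, hι] at h
    exact IsLocalization.injective K hS_nonZeroDivisors (congrArg Prod.fst h)
  · obtain ⟨q, a, rfl⟩ := exists_one_tmul_sub_tmul_one_eq hS x
    exact ⟨(q, a), hφ q a⟩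
  · ext ⟨q, a⟩
    simp only [LinearMap.mem_ker, LinearMap.mem_range, hφ, hι, sub_eq_zero,
      one_tmul_eq_tmul_one_iff hS, Prod.mk.injEq]

end FractureSquare

end AnalyticIso

lemma isUnit_natCast_padicInt_iff {p n : ℕ} [Fact p.Prime] :
    IsUnit (n : ℤ_[p]) ↔ p.Coprime n := by
  rw [PadicInt.isUnit_iff, PadicInt.norm_natCast_eq_one_iff]

lemma isAnalyticIsoAlong_padicInt (p : ℕ) [Fact p.Prime] :
    IsAnalyticIsoAlong ℤ_[p] (p : ℤ) where
  isSMulRegular_base := .of_ne_zero (mod_cast (Fact.out : p.Prime).ne_zero)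
  isSMulRegular := .of_ne_zero (mod_cast (Fact.out : p.Prime).ne_zero)
  dvd_of_algebraMap_eq_smul {n b} h := by
    have hdvd : (p : ℤ_[p]) ∣ n := ⟨b, by simpa using h⟩
    simpa using (PadicInt.pow_p_dvd_int_iff 1 n).1 (by simpa using hdvd)
  exists_eq_algebraMap_add_smul a := by
    obtain ⟨b, hb⟩ := (PadicInt.norm_lt_one_iff_dvd _).1 (PadicInt.norm_sub_zmodRepr_lt_one a)
    exact ⟨a.zmodRepr, b, by simp [← hb]⟩

lemma isAnalyticIsoAlong_pi_padicInt {d : ℤ} (hd : d ≠ 0) :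
    IsAnalyticIsoAlong (∀ p : Nat.Primes, ℤ_[(p : ℕ)]) d := by
  have hnat (n : ℕ) (hn : n ≠ 0) :
      IsAnalyticIsoAlong (∀ p : Nat.Primes, ℤ_[(p : ℕ)]) (n : ℤ) := by
    induction n using Nat.recOnMul with
    | zero => exact absurd rfl hn
    | one => exact .of_isUnit (by simp)
    | prime q hq =>
      have : Fact q.Prime := ⟨hq⟩
      refine .pi (j := ⟨q, hq⟩) (isAnalyticIsoAlong_padicInt q) fun p hpq => ?_
      have hcoprime : (p : ℕ).Coprime q :=
        (Nat.coprime_primes p.2 hq).2 fun h => hpq (Subtype.ext h)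
      simpa using isUnit_natCast_padicInt_iff.2 hcoprime
    | mul m n ihm ihn =>
      rw [Nat.cast_mul]
      exact (ihm (left_ne_zero_of_mul hn)).mul (ihn (right_ne_zero_of_mul hn))
  rw [← d.sign_mul_natAbs]
  exact .mul (.of_isUnit (Int.isUnit_iff_abs_eq.2 (Int.abs_sign_of_ne_zero hd)))
    (hnat _ (Int.natAbs_ne_zero.2 hd))

/-- The arithmetic fracture square for `ℤ`: the sequence
`0 → ℤ → ℚ × ∏_p ℤ_p → ℚ ⊗_ℤ ∏_p ℤ_p → 0` is exact, where the second map is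
`n ↦ (n, n·1)` and the third map is `(q, a) ↦ 1 ⊗ a - q ⊗ 1`. -/
theorem stmt10
    (ι : ℤ →ₗ[ℤ] ℚ × (∀ p : Nat.Primes, ℤ_[(p : ℕ)]))
    (hι : ∀ n : ℤ, ι n = ((n : ℚ), (n : ∀ p : Nat.Primes, ℤ_[(p : ℕ)])))
    (φ : (ℚ × (∀ p : Nat.Primes, ℤ_[(p : ℕ)])) →ₗ[ℤ]
      ℚ ⊗[ℤ] (∀ p : Nat.Primes, ℤ_[(p : ℕ)]))
    (hφ : ∀ (q : ℚ) (a : ∀ p : Nat.Primes, ℤ_[(p : ℕ)]),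
      φ (q, a) = (1 : ℚ) ⊗ₜ[ℤ] a - q ⊗ₜ[ℤ] (1 : ∀ p : Nat.Primes, ℤ_[(p : ℕ)])) :
    Function.Injective ι ∧ Function.Surjective φ ∧
      LinearMap.ker φ = LinearMap.range ι := by
  exact stmt10_general (nonZeroDivisors ℤ)
    (fun d hd => isAnalyticIsoAlong_pi_padicInt (nonZeroDivisors.ne_zero hd)) ι hι φ hφ
end
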